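/- Let G be a finite group, E a nonzero finite dimensional Archimedean Riesz space, and ρ : G → Aut⁺(E) a positive representation. Let {B_i}_{i ∈ I} be the set of all irreducible ρ-invariant bands of E, i.e., nonzero ρ-invariant bands B such that the only ρ-invariant bands contained in B are {0} and B. Then E is the order direct sum ⊕_{i ∈ I} B_i, and every ρ-invariant band of E equals the direct sum of those B_i that it contains. -/

import Mathlib

/-- A (Riesz) ideal of an ordered real vector space: a submodule `I` such that
`|x| ≤ |y|` and `y ∈ I` imply `x ∈ I`. -/
def IsRieszIdeal {E : Type*} [AddCommGroup E] [Lattice E] [Module ℝ E]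
    (I : Submodule ℝ E) : Prop :=
  ∀ x y : E, |x| ≤ |y| → y ∈ I → x ∈ I

/-- A band: an ideal closed under suprema of its subsets (when they exist in `E`). -/
def IsBand {E : Type*} [AddCommGroup E] [Lattice E] [Module ℝ E]
    (B : Submodule ℝ E) : Prop :=
  IsRieszIdeal B ∧ ∀ (D : Set E) (x : E), D ⊆ (B : Set E) → IsLUB D x → x ∈ B

/-- The disjoint complement of a set `D`. -/
def disjComplement {E : Type*} [AddCommGroup E] [Lattice E] (D : Set E) : Set E :=
  {x : E | ∀ y ∈ D, |x| ⊓ |y| = 0}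

/-- A projection band: a band `B` with `E = B ⊕ Bᵈ`. -/
def IsProjectionBand {E : Type*} [AddCommGroup E] [Lattice E] [Module ℝ E]
    (B : Submodule ℝ E) : Prop :=
  IsBand B ∧ ∀ x : E, ∃ y ∈ B, ∃ z ∈ disjComplement (B : Set E), x = y + z

/-- An order direct sum decomposition `E = L ⊕ M`: every element decomposes uniquely
as a sum of an element of `L` and an element of `M`, and an element is positive iff
both its components are positive. -/
def IsOrderDecomposition {E : Type*} [AddCommGroup E] [Lattice E] [Module ℝ E]
    (L M : Submodule ℝ E) : Prop :=
  (∀ x : E, ∃ y ∈ L, ∃ z ∈ M, x = y + z) ∧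
  (∀ x : E, x ∈ L → x ∈ M → x = 0) ∧
  (∀ y z : E, y ∈ L → z ∈ M → (0 ≤ y + z ↔ 0 ≤ y ∧ 0 ≤ z))

/-- A homomorphism `ρ : G →* (E ≃ₗ[ℝ] E)` is a positive representation when each
`ρ s` is an order isomorphism (hence a lattice automorphism). -/
def IsPositiveRep {E : Type*} [AddCommGroup E] [Lattice E] [Module ℝ E]
    {G : Type*} [Group G] (ρ : G →* (E ≃ₗ[ℝ] E)) : Prop :=
  ∀ (s : G) (x y : E), x ≤ y ↔ ρ s x ≤ ρ s y

/-- A submodule is `ρ`-invariant if it is mapped into itself by every `ρ s`. -/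
def InvariantSubmodule {E : Type*} [AddCommGroup E] [Lattice E] [Module ℝ E]
    {G : Type*} [Group G] (ρ : G →* (E ≃ₗ[ℝ] E)) (B : Submodule ℝ E) : Prop :=
  ∀ (s : G), ∀ x ∈ B, ρ s x ∈ B

/-- `ρ` is order indecomposable if the only `ρ`-invariant order direct sum
decompositions `E = L ⊕ M` are the trivial ones. -/
def OrderIndecomposable {E : Type*} [AddCommGroup E] [Lattice E] [Module ℝ E]
    {G : Type*} [Group G] (ρ : G →* (E ≃ₗ[ℝ] E)) : Prop :=
  ∀ L M : Submodule ℝ E, IsOrderDecomposition L M →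
    InvariantSubmodule ρ L → InvariantSubmodule ρ M → L = ⊥ ∨ L = ⊤

/-- `ρ` is projection band irreducible if the only `ρ`-invariant projection bands
are `{0}` and `E`. -/
def ProjectionBandIrreducible {E : Type*} [AddCommGroup E] [Lattice E] [Module ℝ E]
    {G : Type*} [Group G] (ρ : G →* (E ≃ₗ[ℝ] E)) : Prop :=
  ∀ B : Submodule ℝ E, IsProjectionBand B → InvariantSubmodule ρ B → B = ⊥ ∨ B = ⊤


/-- `E` is Archimedean: if `0 ≤ n • x ≤ y` for all positive integers `n`, then `x = 0`. -/
def RieszArchimedean (E : Type*) [AddCommGroup E] [Lattice E] [Module ℝ E] : Prop :=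
  ∀ x y : E, (∀ n : ℕ, 0 < n → 0 ≤ n • x ∧ n • x ≤ y) → x = 0

/-- `E` is the internal order direct sum of the family of submodules `B i`: every
element of `E` is uniquely a finite sum of elements of the `B i`, and such a sum is
positive if and only if all its terms are positive. -/
def IsInternalOrderDirectSum {E : Type*} [AddCommGroup E] [Lattice E] [Module ℝ E]
    {ι : Type*} (B : ι → Submodule ℝ E) : Prop :=
  (∀ x : E, ∃ f : ι →₀ E, (∀ i, f i ∈ B i) ∧ f.sum (fun _ v => v) = x) ∧
  (∀ f : ι →₀ E, (∀ i, f i ∈ B i) → f.sum (fun _ v => v) = 0 → f = 0) ∧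
  (∀ f : ι →₀ E, (∀ i, f i ∈ B i) → (0 ≤ f.sum (fun _ v => v) ↔ ∀ i, 0 ≤ f i))

/-- An irreducible invariant band: a nonzero `ρ`-invariant band `B` such that the only
`ρ`-invariant bands contained in `B` are `{0}` and `B`. -/
def IsIrreducibleInvariantBand {E : Type*} [AddCommGroup E] [Lattice E] [Module ℝ E]
    {G : Type*} [Group G] (ρ : G →* (E ≃ₗ[ℝ] E)) (B : Submodule ℝ E) : Prop :=
  IsBand B ∧ InvariantSubmodule ρ B ∧ B ≠ ⊥ ∧
    ∀ C : Submodule ℝ E, IsBand C → InvariantSubmodule ρ C → C ≤ B → C = ⊥ ∨ C = B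

/-! In a finite dimensional Archimedean Riesz space the atoms span, since a minimal nonzero ideal is
totally ordered and therefore one-dimensional. Moreover an atom that does not belong to an ideal `I`
is disjoint from `I`. Hence `E = I ⊔ Iᵈ` for every ideal `I`, which makes every ideal a projection
band. The band generated by the orbit of an atom is irreducible, because an invariant band contains
the atom, and then its whole orbit, or is disjoint from the orbit. For an invariant band `C`, every
atom lies in `Cᵈ` or in the irreducible band `≤ C` generated by its orbit, so these irreducible
bands already fill up `C`. Two distinct irreducible bands meet in `0` and are therefore disjoint,
which gives the uniqueness and the positivity of the decomposition. -/

section LatticeOrderedGroup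

variable {E : Type*} [AddCommGroup E] [Lattice E] [IsOrderedAddMonoid E] {a b c x y : E}

lemma add_inf_le_inf_add_inf (ha : 0 ≤ a) (hb : 0 ≤ b) (hc : 0 ≤ c) :
    (a + b) ⊓ c ≤ a ⊓ c + b ⊓ c := by
  rw [inf_add, add_inf, add_inf]
  exact le_inf (le_inf inf_le_left (inf_le_right.trans (le_add_of_nonneg_left ha)))
    (le_inf (inf_le_right.trans (le_add_of_nonneg_right hb))
      (inf_le_right.trans (le_add_of_nonneg_right hc)))

lemma eq_zero_of_abs_nonpos (h : |x| ≤ 0) : x = 0 :=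
  le_antisymm ((le_abs_self x).trans h) (neg_nonpos.1 ((neg_le_abs x).trans h))

lemma negPart_le_abs (x : E) : x⁻ ≤ |x| := sup_le (neg_le_abs x) (abs_nonneg x)

lemma posPart_le_abs (x : E) : x⁺ ≤ |x| := sup_le (le_abs_self x) (abs_nonneg x)

lemma nonneg_of_nonneg_add_of_abs_inf_abs_eq_zero (h : 0 ≤ x + y) (hxy : |x| ⊓ |y| = 0) :
    0 ≤ x := by
  have hy : x⁻ ≤ |y| :=
    sup_le ((neg_le_iff_add_nonneg'.2 h).trans (le_abs_self y)) (abs_nonneg y)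
  have hx : x⁻ ≤ 0 := hxy ▸ le_inf (negPart_le_abs x) hy
  exact negPart_eq_zero.1 (hx.antisymm (negPart_nonneg x))

end LatticeOrderedGroup

section OrderedModule

variable {E : Type*} [AddCommGroup E] [Lattice E] [Module ℝ E]

lemma smul_inf_of_pos [PosSMulMono ℝ E] {c : ℝ} (hc : 0 < c) (x y : E) :
    c • (x ⊓ y) = c • x ⊓ c • y :=
  (OrderIso.smulRight (β := E) hc).map_inf x y

lemma smul_posPart_of_pos [PosSMulMono ℝ E] {c : ℝ} (hc : 0 < c) (x : E) :
    c • x⁺ = (c • x)⁺ := by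
  have h := (OrderIso.smulRight (β := E) hc).map_sup x 0
  simpa only [posPart_def, OrderIso.smulRight_apply, smul_zero] using h

lemma abs_smul_le_smul_abs [PosSMulMono ℝ E] (c : ℝ) (x : E) : |c • x| ≤ |c| • |x| := by
  have smul_le (c : ℝ) : c • x ≤ |c| • |x| := by
    rcases le_total 0 c with hc | hc
    · rw [abs_of_nonneg hc]
      exact smul_le_smul_of_nonneg_left (le_abs_self x) hc
    · rw [abs_of_nonpos hc, ← neg_smul_neg]
      exact smul_le_smul_of_nonneg_left (neg_le_abs x) (neg_nonneg.2 hc)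
  refine abs_le'.2 ⟨smul_le c, ?_⟩
  simpa only [neg_smul, abs_neg] using smul_le (-c)

lemma abs_smul_inf_abs_eq_zero [IsOrderedAddMonoid E] [IsOrderedModule ℝ E] {x y : E}
    (h : |x| ⊓ |y| = 0) (c : ℝ) :
    |c • x| ⊓ |y| = 0 := by
  set t := max 1 |c|
  have ht : 1 ≤ t := le_max_left 1 |c|
  have hx : |c • x| ≤ t • |x| :=
    (abs_smul_le_smul_abs c x).trans
      (smul_le_smul_of_nonneg_right (le_max_right 1 |c|) (abs_nonneg x))
  have hy : |y| ≤ t • |y| := le_smul_of_one_le_left (abs_nonneg y) ht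
  refine le_antisymm ?_ (le_inf (abs_nonneg _) (abs_nonneg y))
  calc |c • x| ⊓ |y| ≤ t • |x| ⊓ t • |y| := inf_le_inf hx hy
    _ = t • (|x| ⊓ |y|) := (smul_inf_of_pos (zero_lt_one.trans_le ht) _ _).symm
    _ = 0 := by rw [h, smul_zero]

end OrderedModule

section Ideal

variable {E : Type*} [AddCommGroup E] [Lattice E] [Module ℝ E] {I J : Submodule ℝ E} {x y : E}

lemma IsRieszIdeal.inf (hI : IsRieszIdeal I) (hJ : IsRieszIdeal J) : IsRieszIdeal (I ⊓ J) :=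
  fun x y hxy hy => ⟨hI x y hxy hy.1, hJ x y hxy hy.2⟩

lemma IsBand.inf (hI : IsBand I) (hJ : IsBand J) : IsBand (I ⊓ J) :=
  ⟨hI.1.inf hJ.1, fun D x hD hx =>
    ⟨hI.2 D x (hD.trans inf_le_left) hx, hJ.2 D x (hD.trans inf_le_right) hx⟩⟩

lemma isBand_top : IsBand (⊤ : Submodule ℝ E) :=
  ⟨fun _ _ _ _ => Submodule.mem_top, fun _ _ _ _ => Submodule.mem_top⟩

variable [IsOrderedAddMonoid E]

lemma IsRieszIdeal.mem_of_nonneg_of_le_abs (hI : IsRieszIdeal I) (hy : y ∈ I) (hx : 0 ≤ x)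
    (hxy : x ≤ |y|) : x ∈ I :=
  hI x y (by rwa [abs_of_nonneg hx]) hy

end Ideal

section DisjointComplement

variable {E : Type*} [AddCommGroup E] [Lattice E] [IsOrderedAddMonoid E] [Module ℝ E]
  [IsOrderedModule ℝ E] {I J : Submodule ℝ E} {D D' : Set E}

/-- The disjoint complement `Dᵈ` of a set `D`, bundled as a submodule so that it takes part in the
lattice of submodules. -/
def disjCompl (D : Set E) : Submodule ℝ E where
  carrier := disjComplement D
  zero_mem' y _ := by rw [abs_zero, inf_of_le_left (abs_nonneg y)]
  add_mem' {a b} ha hb y hy := by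
    refine le_antisymm ?_ (le_inf (abs_nonneg _) (abs_nonneg y))
    calc |a + b| ⊓ |y| ≤ (|a| + |b|) ⊓ |y| := inf_le_inf_right _ (abs_add_le a b)
      _ ≤ |a| ⊓ |y| + |b| ⊓ |y| :=
        add_inf_le_inf_add_inf (abs_nonneg a) (abs_nonneg b) (abs_nonneg y)
      _ = 0 := by rw [ha y hy, hb y hy, add_zero]
  smul_mem' c x hx y hy := abs_smul_inf_abs_eq_zero (hx y hy) c

lemma isRieszIdeal_disjCompl (D : Set E) : IsRieszIdeal (disjCompl D) := fun x _ hxy hy z hz =>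
  le_antisymm (hy z hz ▸ inf_le_inf_right |z| hxy) (le_inf (abs_nonneg x) (abs_nonneg z))

lemma subset_disjCompl_comm : D ⊆ (disjCompl D' : Set E) ↔ D' ⊆ (disjCompl D : Set E) :=
  ⟨fun h x hx y hy => inf_comm |x| |y| ▸ h hy x hx,
    fun h x hx y hy => inf_comm |x| |y| ▸ h hy x hx⟩

lemma subset_disjCompl_disjCompl (D : Set E) : D ⊆ (disjCompl (disjCompl D : Set E) : Set E) :=
  subset_disjCompl_comm.1 le_rfl

lemma disjCompl_anti (h : D ⊆ D') : disjCompl D' ≤ disjCompl D :=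
  fun _ hx y hy => hx y (h hy)

lemma disjoint_disjCompl (I : Submodule ℝ E) : Disjoint I (disjCompl I) :=
  Submodule.disjoint_def.2 fun x hx hx' =>
    eq_zero_of_abs_nonpos (inf_idem |x| ▸ hx' x hx).le

lemma IsRieszIdeal.le_disjCompl (hI : IsRieszIdeal I) (hJ : IsRieszIdeal J) (h : Disjoint I J) :
    I ≤ disjCompl J := fun x hx y hy =>
  have hxy : 0 ≤ |x| ⊓ |y| := le_inf (abs_nonneg x) (abs_nonneg y)
  Submodule.disjoint_def.1 h _ (hI.mem_of_nonneg_of_le_abs hx hxy inf_le_left)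
    (hJ.mem_of_nonneg_of_le_abs hy hxy inf_le_right)

lemma disjCompl_disjCompl_of_codisjoint (h : Codisjoint I (disjCompl I)) :
    disjCompl (disjCompl (I : Set E) : Set E) = I := by
  refine (eq_of_le_of_inf_le_of_le_sup (z := disjCompl (I : Set E))
    (subset_disjCompl_disjCompl _) ?_ (h.eq_top.symm ▸ le_top)).symm
  exact (disjoint_disjCompl (disjCompl (I : Set E))).symm.le_bot.trans bot_le

lemma isBand_of_codisjoint_disjCompl (h : Codisjoint I (disjCompl I)) : IsBand I := by
  refine ⟨disjCompl_disjCompl_of_codisjoint h ▸ isRieszIdeal_disjCompl _, fun D x hD hx => ?_⟩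
  obtain ⟨y, hy, z, hz, rfl⟩ := Submodule.mem_sup.1 (h.eq_top ▸ Submodule.mem_top (x := x))
  have le_y_and_nonneg (d : E) (hd : d ∈ D) : d ≤ y ∧ 0 ≤ z := by
    have hyd : y - d ∈ I := I.sub_mem hy (hD hd)
    have hzd : |z| ⊓ |y - d| = 0 := hz _ hyd
    have hsum : 0 ≤ (y - d) + z := by
      rw [sub_add_eq_add_sub]
      exact sub_nonneg.2 (hx.1 hd)
    exact ⟨sub_nonneg.1
      (nonneg_of_nonneg_add_of_abs_inf_abs_eq_zero hsum (inf_comm |z| _ ▸ hzd)),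
      nonneg_of_nonneg_add_of_abs_inf_abs_eq_zero (add_comm _ z ▸ hsum) hzd⟩
  have hz_nonneg : 0 ≤ z := le_add_iff_nonneg_right _ |>.1 <|
    hx.2 fun d hd => (hx.1 hd).trans (le_add_of_nonneg_right (le_y_and_nonneg d hd).2)
  have hz_nonpos : z ≤ 0 := add_le_iff_nonpos_right _ |>.1 <|
    hx.2 fun d hd => (le_y_and_nonneg d hd).1
  rwa [le_antisymm hz_nonpos hz_nonneg, add_zero]

lemma isInternalOrderDirectSum_of_iSup_eq_top {ι : Type*} {B : ι → Submodule ℝ E}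
    (htop : ⨆ i, B i = ⊤) (hdisj : Pairwise fun i j => B i ≤ disjCompl (B j)) :
    IsInternalOrderDirectSum B := by
  have sum_nonneg_iff (f : ι →₀ E) (hf : ∀ i, f i ∈ B i) :
      0 ≤ f.sum (fun _ v => v) ↔ ∀ i, 0 ≤ f i := by
    refine ⟨fun h i => ?_, fun h => Finset.sum_nonneg fun i _ => h i⟩
    have hrest : (f.erase i).sum (fun _ v => v) ∈ disjCompl (B i : Set E) := by
      refine Submodule.sum_mem _ fun j hj => ?_
      have hji : j ≠ i := by
        rintro rfl
        exact Finsupp.mem_support_iff.1 hj Finsupp.erase_same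
      simpa only [Finsupp.erase_ne hji] using hdisj hji (hf j)
    rw [← Finsupp.add_sum_erase' f i _ fun _ => rfl] at h
    exact nonneg_of_nonneg_add_of_abs_inf_abs_eq_zero h (inf_comm |f i| _ ▸ hrest _ (hf i))
  refine ⟨fun x => ?_, fun f hf h => ?_, sum_nonneg_iff⟩
  · exact (Submodule.mem_iSup_iff_exists_finsupp B x).1 (htop ▸ Submodule.mem_top)
  · have hf_nonneg : ∀ i, 0 ≤ f i := (sum_nonneg_iff f hf).1 h.ge
    ext i
    by_contra hi
    exact hi ((Finset.sum_eq_zero_iff_of_nonneg fun j _ => hf_nonneg j).1 h i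
      (Finsupp.mem_support_iff.2 hi))

end DisjointComplement

section Atom

variable {E : Type*} [AddCommGroup E] [Lattice E] [Module ℝ E]

/-- An atom of a Riesz space: a positive element `a` whose order interval `[0, a]` consists of real
multiples of `a`. -/
def IsRieszAtom (a : E) : Prop :=
  0 < a ∧ ∀ y : E, 0 ≤ y → y ≤ a → ∃ t : ℝ, y = t • a

variable [IsOrderedAddMonoid E] [IsOrderedModule ℝ E] {I : Submodule ℝ E} {a : E}

lemma IsRieszAtom.mem_or_mem_disjCompl (ha : IsRieszAtom a) (hI : IsRieszIdeal I) :
    a ∈ I ∨ a ∈ disjCompl (I : Set E) := by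
  refine or_iff_not_imp_right.2 fun h => ?_
  obtain ⟨b, hb, hab⟩ : ∃ b ∈ I, |a| ⊓ |b| ≠ 0 := by
    by_contra! h'
    exact h h'
  rw [abs_of_nonneg ha.1.le] at hab
  have hab_nonneg : 0 ≤ a ⊓ |b| := le_inf ha.1.le (abs_nonneg b)
  obtain ⟨t, ht⟩ := ha.2 _ hab_nonneg inf_le_left
  have hta : t • a ∈ I := ht ▸ hI.mem_of_nonneg_of_le_abs hb hab_nonneg inf_le_right
  exact (I.smul_mem_iff (fun ht0 => hab (by rw [ht, ht0, zero_smul]))).1 hta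

lemma IsRieszIdeal.codisjoint_disjCompl
    (hspan : Submodule.span ℝ {a : E | IsRieszAtom a} = ⊤) (hI : IsRieszIdeal I) :
    Codisjoint I (disjCompl I) := by
  rw [codisjoint_iff_le_sup, ← hspan, Submodule.span_le]
  intro a ha
  exact (ha.mem_or_mem_disjCompl hI).elim (Submodule.mem_sup_left ·) (Submodule.mem_sup_right ·)

end Atom

section Archimedean

variable {E : Type*} [AddCommGroup E] [Lattice E] [IsOrderedAddMonoid E] [Module ℝ E]
  [IsOrderedModule ℝ E] {I : Submodule ℝ E} {a x y : E}

namespace RieszArchimedean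

lemma nonpos_of_forall_le_smul (hE : RieszArchimedean E)
    (h : ∀ ε : ℝ, 0 < ε → x ≤ ε • y) : x ≤ 0 := by
  refine posPart_eq_zero.1 (hE x⁺ y⁺ fun n hn => ⟨nsmul_nonneg (posPart_nonneg x) n, ?_⟩)
  have hn' : (0 : ℝ) < n := Nat.cast_pos.2 hn
  have hxy : (n : ℝ) • x ≤ y := (le_inv_smul_iff_of_pos hn').1 (h _ (inv_pos.2 hn'))
  rw [← Nat.cast_smul_eq_nsmul ℝ, smul_posPart_of_pos hn']
  exact posPart_mono hxy

lemma exists_isGreatest_smul_le (hE : RieszArchimedean E) (ha : 0 < a) (hx : 0 ≤ x) :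
    ∃ t : ℝ, IsGreatest {t : ℝ | t • a ≤ x} t := by
  set T := {t : ℝ | t • a ≤ x}
  have hne : T.Nonempty := ⟨0, by simpa [T] using hx⟩
  have hbdd : BddAbove T := by
    by_contra hT
    refine ha.not_ge (hE.nonpos_of_forall_le_smul (y := x) fun ε hε => ?_)
    obtain ⟨t, ht, hεt⟩ := not_bddAbove_iff.1 hT ε⁻¹
    exact (inv_smul_le_iff_of_pos hε).1
      ((smul_le_smul_of_nonneg_right hεt.le ha.le).trans ht)
  refine ⟨sSup T, sub_nonpos.1 (hE.nonpos_of_forall_le_smul (y := a) fun ε hε => ?_),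
    fun t ht => le_csSup hbdd ht⟩
  obtain ⟨t, ht, hlt⟩ := exists_lt_of_lt_csSup hne (sub_lt_self (sSup T) hε)
  rw [sub_le_iff_le_add']
  calc sSup T • a ≤ (t + ε) • a :=
        smul_le_smul_of_nonneg_right (sub_lt_iff_lt_add.1 hlt).le ha.le
    _ = t • a + ε • a := add_smul t ε a
    _ ≤ x + ε • a := add_le_add_left ht _

lemma isRieszAtom_of_forall_nonpos_or_nonneg (hE : RieszArchimedean E)
    (hI : IsRieszIdeal I) (htotal : ∀ u ∈ I, u ≤ 0 ∨ 0 ≤ u) (haI : a ∈ I) (ha : 0 < a) :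
    IsRieszAtom a := by
  refine ⟨ha, fun y hy hya => ?_⟩
  have hyI : y ∈ I := hI.mem_of_nonneg_of_le_abs haI hy (hya.trans (le_abs_self a))
  obtain ⟨t, hta, ht⟩ := hE.exists_isGreatest_smul_le ha hy
  refine ⟨t, le_antisymm (sub_nonpos.1 (hE.nonpos_of_forall_le_smul (y := a) fun ε hε => ?_)) hta⟩
  have hsub : y - (t + ε) • a ∈ I := I.sub_mem hyI (I.smul_mem _ haI)
  rcases htotal _ hsub with h | h
  · rwa [add_smul, ← sub_sub, sub_nonpos] at h
  · exact absurd (ht (sub_nonneg.1 h)) (lt_add_of_pos_right t hε).not_ge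

lemma exists_isRieszAtom_mem [FiniteDimensional ℝ E] (hE : RieszArchimedean E)
    (hI : IsRieszIdeal I) (hI0 : I ≠ ⊥) : ∃ a ∈ I, IsRieszAtom a := by
  induction I using WellFoundedLT.induction with
  | ind I ih =>
  by_cases htotal : ∀ u ∈ I, u ≤ 0 ∨ 0 ≤ u
  · obtain ⟨b, hb, hb0⟩ := I.ne_bot_iff.1 hI0
    have habs : 0 < |b| :=
      (abs_nonneg b).lt_of_not_ge fun h => hb0 (eq_zero_of_abs_nonpos h)
    have hbI : |b| ∈ I := hI.mem_of_nonneg_of_le_abs hb (abs_nonneg b) le_rfl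
    exact ⟨|b|, hbI, hE.isRieszAtom_of_forall_nonpos_or_nonneg hI htotal hbI habs⟩
  · push Not at htotal
    obtain ⟨u, hu, hpos, hneg⟩ := htotal
    have hposI : u⁺ ∈ I := hI.mem_of_nonneg_of_le_abs hu (posPart_nonneg u) (posPart_le_abs u)
    have hnegI : u⁻ ∈ I := hI.mem_of_nonneg_of_le_abs hu (negPart_nonneg u) (negPart_le_abs u)
    have hneg_mem : u⁻ ∈ I ⊓ disjCompl {u⁺} := by
      refine ⟨hnegI, ?_⟩
      rintro _ rfl
      rw [abs_of_nonneg (negPart_nonneg u), abs_of_nonneg (posPart_nonneg u), inf_comm,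
        posPart_inf_negPart_eq_zero]
    have hpos_notMem : u⁺ ∉ I ⊓ disjCompl {u⁺} := fun h =>
      hpos (posPart_eq_zero.1 (eq_zero_of_abs_nonpos (inf_idem |u⁺| ▸ h.2 _ rfl).le))
    have hlt : I ⊓ disjCompl {u⁺} < I :=
      inf_le_left.lt_of_ne fun h => hpos_notMem (h.ge hposI)
    obtain ⟨a, ha, hatom⟩ := ih _ hlt (hI.inf (isRieszIdeal_disjCompl _))
      (Submodule.ne_bot_iff _ |>.2 ⟨_, hneg_mem, fun h => hneg (negPart_eq_zero.1 h)⟩)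
    exact ⟨a, ha.1, hatom⟩

lemma codisjoint_span_singleton_disjCompl (hE : RieszArchimedean E) (ha : IsRieszAtom a) :
    Codisjoint (Submodule.span ℝ {a}) (disjCompl {a}) := by
  have mem_of_nonneg (x : E) (hx : 0 ≤ x) : x ∈ Submodule.span ℝ {a} ⊔ disjCompl {a} := by
    obtain ⟨t, hta, ht⟩ := hE.exists_isGreatest_smul_le ha.1 hx
    have hinf : 0 ≤ (x - t • a) ⊓ a := le_inf (sub_nonneg.2 hta) ha.1.le
    obtain ⟨s, hs⟩ := ha.2 _ hinf inf_le_right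
    have hs_nonpos : s ≤ 0 := by
      have hst : (s + t) • a ≤ x := by
        rw [add_smul, ← le_sub_iff_add_le, ← hs]
        exact inf_le_left
      linarith [ht hst]
    have hdisj : x - t • a ∈ disjCompl {a} := by
      rintro _ rfl
      rw [abs_of_nonneg (sub_nonneg.2 hta), abs_of_nonneg ha.1.le]
      exact hinf.antisymm' (hs ▸ smul_nonpos_of_nonpos_of_nonneg hs_nonpos ha.1.le)
    exact Submodule.mem_sup.2 ⟨t • a, Submodule.smul_mem _ t (Submodule.mem_span_singleton_self a),
      x - t • a, hdisj, add_sub_cancel _ _⟩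
  rw [codisjoint_iff, Submodule.eq_top_iff']
  intro x
  rw [← posPart_sub_negPart x]
  exact Submodule.sub_mem _ (mem_of_nonneg _ (posPart_nonneg x))
    (mem_of_nonneg _ (negPart_nonneg x))

lemma le_span_isRieszAtom [FiniteDimensional ℝ E] (hE : RieszArchimedean E)
    (hI : IsRieszIdeal I) : I ≤ Submodule.span ℝ {a : E | IsRieszAtom a} := by
  induction I using WellFoundedLT.induction with
  | ind I ih =>
  rcases eq_or_ne I ⊥ with rfl | hI0
  · exact bot_le
  obtain ⟨a, haI, ha⟩ := hE.exists_isRieszAtom_mem hI hI0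
  have ha_notMem : a ∉ I ⊓ disjCompl {a} := fun h =>
    ha.1.ne' (eq_zero_of_abs_nonpos (inf_idem |a| ▸ h.2 a rfl).le)
  have hlt : I ⊓ disjCompl {a} < I := inf_le_left.lt_of_ne fun h => ha_notMem (h.ge haI)
  have haI_le : Submodule.span ℝ {a} ≤ I := (Submodule.span_singleton_le_iff_mem a I).2 haI
  calc I = (Submodule.span ℝ {a} ⊔ disjCompl {a}) ⊓ I := by
        rw [(hE.codisjoint_span_singleton_disjCompl ha).eq_top, top_inf_eq]
    _ = Submodule.span ℝ {a} ⊔ disjCompl {a} ⊓ I := sup_inf_assoc_of_le _ haI_le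
    _ ≤ Submodule.span ℝ {a : E | IsRieszAtom a} :=
      sup_le (Submodule.span_mono (Set.singleton_subset_iff.2 ha))
        (inf_comm I _ ▸ ih _ hlt (hI.inf (isRieszIdeal_disjCompl _)))

lemma span_isRieszAtom_eq_top [FiniteDimensional ℝ E] (hE : RieszArchimedean E) :
    Submodule.span ℝ {a : E | IsRieszAtom a} = ⊤ :=
  top_le_iff.1 (hE.le_span_isRieszAtom isBand_top.1)

end RieszArchimedean

end Archimedean

section Representation

variable {G E : Type*} [Group G] [AddCommGroup E] [Lattice E] [Module ℝ E]
  {ρ : G →* (E ≃ₗ[ℝ] E)} {B C : Submodule ℝ E} {D : Set E} {a x : E}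

lemma InvariantSubmodule.inf (hB : InvariantSubmodule ρ B) (hC : InvariantSubmodule ρ C) :
    InvariantSubmodule ρ (B ⊓ C) :=
  fun s x hx => ⟨hB s x hx.1, hC s x hx.2⟩

lemma IsIrreducibleInvariantBand.disjoint (hB : IsIrreducibleInvariantBand ρ B)
    (hC : IsIrreducibleInvariantBand ρ C) (hne : B ≠ C) : Disjoint B C := by
  have hband : IsBand (B ⊓ C) := hB.1.inf hC.1
  have hinv : InvariantSubmodule ρ (B ⊓ C) := hB.2.1.inf hC.2.1
  refine disjoint_iff.2 ((hB.2.2.2 _ hband hinv inf_le_left).resolve_right fun hinfB => ?_)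
  rcases hC.2.2.2 _ hband hinv inf_le_right with hbot | hinfC
  · exact hB.2.2.1 (hinfB.symm.trans hbot)
  · exact hne (hinfB.symm.trans hinfC)

lemma IsPositiveRep.abs_inf_abs_apply (hρ : IsPositiveRep ρ) (s : G) (x y : E) :
    |ρ s x| ⊓ |ρ s y| = ρ s (|x| ⊓ |y|) := by
  let φ : E ≃o E := { (ρ s).toEquiv with map_rel_iff' := (hρ s _ _).symm }
  have map_abs (z : E) : |ρ s z| = ρ s |z| := by
    rw [abs, ← map_neg]
    exact (φ.map_sup z (-z)).symm
  rw [map_abs, map_abs]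
  exact (φ.map_inf |x| |y|).symm

variable [IsOrderedAddMonoid E] [IsOrderedModule ℝ E]

lemma IsPositiveRep.invariantSubmodule_disjCompl (hρ : IsPositiveRep ρ)
    (hD : ∀ s, ∀ x ∈ D, ρ s x ∈ D) : InvariantSubmodule ρ (disjCompl D) := by
  intro s x hx y hy
  have hsy : ρ s (ρ s⁻¹ y) = y := by
    rw [← LinearEquiv.mul_apply, ← map_mul, mul_inv_cancel, map_one, LinearEquiv.coe_one, id]
  rw [← hsy, hρ.abs_inf_abs_apply, hx _ (hD s⁻¹ y hy), map_zero]

/-- The band generated by the orbit of `x` under `ρ`, encoded as the double disjoint complement of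
the orbit. -/
def orbitBand (ρ : G →* (E ≃ₗ[ℝ] E)) (x : E) : Submodule ℝ E :=
  disjCompl (disjCompl (Set.range fun s => ρ s x))

lemma mem_orbitBand (ρ : G →* (E ≃ₗ[ℝ] E)) (x : E) : x ∈ orbitBand ρ x :=
  subset_disjCompl_disjCompl _ ⟨1, by simp only [map_one, LinearEquiv.coe_one, id]⟩

lemma IsPositiveRep.invariantSubmodule_orbitBand (hρ : IsPositiveRep ρ) (x : E) :
    InvariantSubmodule ρ (orbitBand ρ x) := by
  refine hρ.invariantSubmodule_disjCompl (hρ.invariantSubmodule_disjCompl ?_)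
  rintro s _ ⟨t, rfl⟩
  exact ⟨s * t, by simp only [map_mul, LinearEquiv.mul_apply]⟩

lemma orbitBand_le (hC : Codisjoint C (disjCompl C)) (hinv : InvariantSubmodule ρ C)
    (hx : x ∈ C) : orbitBand ρ x ≤ C := by
  rw [← disjCompl_disjCompl_of_codisjoint hC]
  exact disjCompl_anti (disjCompl_anti (Set.range_subset_iff.2 fun s => hinv s x hx))

section SpannedByAtoms

variable (hspan : Submodule.span ℝ {a : E | IsRieszAtom a} = ⊤)
include hspan

lemma IsRieszAtom.isIrreducibleInvariantBand_orbitBand (hρ : IsPositiveRep ρ)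
    (ha : IsRieszAtom a) : IsIrreducibleInvariantBand ρ (orbitBand ρ a) := by
  have hideal : IsRieszIdeal (orbitBand ρ a) := isRieszIdeal_disjCompl _
  refine ⟨isBand_of_codisjoint_disjCompl (hideal.codisjoint_disjCompl hspan),
    hρ.invariantSubmodule_orbitBand a,
    (Submodule.ne_bot_iff _).2 ⟨a, mem_orbitBand ρ a, ha.1.ne'⟩, fun C hC hinv hle => ?_⟩
  rcases ha.mem_or_mem_disjCompl hC.1 with haC | haC
  · exact Or.inr (hle.antisymm (orbitBand_le (hC.1.codisjoint_disjCompl hspan) hinv haC))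
  · have hle' : orbitBand ρ a ≤ disjCompl C :=
      orbitBand_le ((isRieszIdeal_disjCompl _).codisjoint_disjCompl hspan)
        (hρ.invariantSubmodule_disjCompl hinv) haC
    exact Or.inl ((disjoint_disjCompl C).eq_bot_of_le (hle.trans hle'))

lemma eq_sSup_isIrreducibleInvariantBand (hρ : IsPositiveRep ρ) (hC : IsBand C)
    (hinv : InvariantSubmodule ρ C) :
    C = sSup {B : Submodule ℝ E | IsIrreducibleInvariantBand ρ B ∧ B ≤ C} := by
  set T := sSup {B : Submodule ℝ E | IsIrreducibleInvariantBand ρ B ∧ B ≤ C}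
  have atom_mem (a : E) (ha : IsRieszAtom a) : a ∈ T ⊔ disjCompl (C : Set E) := by
    refine (ha.mem_or_mem_disjCompl hC.1).elim (fun haC => ?_) (Submodule.mem_sup_right ·)
    have hle : orbitBand ρ a ≤ T := le_sSup
      ⟨ha.isIrreducibleInvariantBand_orbitBand hspan hρ,
        orbitBand_le (hC.1.codisjoint_disjCompl hspan) hinv haC⟩
    exact Submodule.mem_sup_left (hle (mem_orbitBand ρ a))
  have htop : T ⊔ disjCompl (C : Set E) = ⊤ :=
    top_le_iff.1 (hspan ▸ Submodule.span_le.2 atom_mem)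
  exact (eq_of_le_of_inf_le_of_le_sup (z := disjCompl (C : Set E)) (sSup_le fun B hB => hB.2)
    ((disjoint_disjCompl C).le_bot.trans bot_le) (htop ▸ le_top)).symm

end SpannedByAtoms

end Representation

theorem stmt15_general {G E : Type*} [Group G] [AddCommGroup E] [Lattice E]
    [IsOrderedAddMonoid E] [Module ℝ E] [IsOrderedModule ℝ E]
    (hspan : Submodule.span ℝ {a : E | IsRieszAtom a} = ⊤)
    (ρ : G →* (E ≃ₗ[ℝ] E)) (hρ : IsPositiveRep ρ) :
    IsInternalOrderDirectSum
      (fun B : {B : Submodule ℝ E // IsIrreducibleInvariantBand ρ B} => B.1) ∧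
    ∀ C : Submodule ℝ E, IsBand C → InvariantSubmodule ρ C →
      C = sSup {B : Submodule ℝ E | IsIrreducibleInvariantBand ρ B ∧ B ≤ C} := by
  refine ⟨isInternalOrderDirectSum_of_iSup_eq_top ?_ fun B C hBC => ?_,
    fun C hC hinv => eq_sSup_isIrreducibleInvariantBand hspan hρ hC hinv⟩
  · have htop := eq_sSup_isIrreducibleInvariantBand hspan hρ isBand_top
      fun _ _ _ => Submodule.mem_top
    simp only [le_top, and_true] at htop
    exact (sSup_eq_iSup' _).symm.trans htop.symm
  · exact B.2.1.1.le_disjCompl C.2.1.1 (B.2.disjoint C.2 (Subtype.coe_injective.ne hBC))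

/-- For a positive representation of a finite group in a nonzero finite dimensional
Archimedean Riesz space, the space is the order direct sum of the irreducible invariant
bands, and every invariant band is the direct sum of the irreducible invariant bands it
contains. -/
theorem stmt15 {G E : Type*} [Group G] [Finite G] [AddCommGroup E] [Lattice E]
    [Module ℝ E] [Nontrivial E] [FiniteDimensional ℝ E]
    (hadd : ∀ x y z : E, x ≤ y → x + z ≤ y + z)
    (hsmul : ∀ (c : ℝ) (x : E), 0 ≤ c → 0 ≤ x → 0 ≤ c • x)
    (harch : RieszArchimedean E)
    (ρ : G →* (E ≃ₗ[ℝ] E)) (hρ : IsPositiveRep ρ) :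
    IsInternalOrderDirectSum
      (fun B : {B : Submodule ℝ E // IsIrreducibleInvariantBand ρ B} => B.1) ∧
    ∀ C : Submodule ℝ E, IsBand C → InvariantSubmodule ρ C →
      C = sSup {B : Submodule ℝ E | IsIrreducibleInvariantBand ρ B ∧ B ≤ C} := by
  have : IsOrderedAddMonoid E :=
    ⟨fun x y h z => hadd x y z h, fun x y h z => add_comm z x ▸ add_comm z y ▸ hadd x y z h⟩
  have : IsOrderedModule ℝ E := .of_smul_nonneg fun c hc x hx => hsmul c x hc hx
  exact stmt15_general harch.span_isRieszAtom_eq_top ρ hρ
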